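/- arXiv:1311.0613 — 2 statements merged into one kernel-verified Lean document; each statement's English description precedes it below -/
import Mathlib

section
/- For every integer g ≥ 1, let Φ be the subset of ℤ/2gℤ consisting of the residue classes of 0, 1, …, g − 1 (i.e., elements whose canonical representative is less than g). Then for every nontrivial subgroup H of ℤ/2gℤ there exist h ∈ H and x ∈ Φ with x + h ∉ Φ. In particular, Φ is not invariant under translation by any nontrivial subgroup of ℤ/2gℤ. -/
/-- For every `g ≥ 1`, the subset `Φ = {0, 1, …, g - 1}` of `ℤ/2gℤ` (elements whose
canonical representative is `< g`) is not invariant under translation by any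
nontrivial subgroup of `ℤ/2gℤ`: every nontrivial subgroup `H` contains some `h`
and there is some `x ∈ Φ` with `x + h ∉ Φ`. -/
theorem stmt_5 (g : ℕ) (hg : 1 ≤ g) (H : AddSubgroup (ZMod (2 * g))) (hH : H ≠ ⊥) :
    ∃ h ∈ H, ∃ x : ZMod (2 * g), x.val < g ∧ ¬ (x + h).val < g := by
  -- Any nonzero `h ∈ H` works.
  obtain ⟨h, hmem, hne⟩ := H.bot_or_exists_ne_zero.resolve_left hH
  have : NeZero (2 * g) := ⟨by omega⟩
  have hpos : 0 < h.val := ZMod.val_pos.mpr hne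
  refine ⟨h, hmem, ?_⟩
  by_cases hlt : h.val < g
  · -- The translate of `g - h` is `g`, the first residue outside `Φ`.
    refine ⟨((g - h.val : ℕ) : ZMod (2 * g)), ?_, ?_⟩
    · rw [ZMod.val_natCast_of_lt (by omega)]
      omega
    · have hsum : ((g - h.val : ℕ) : ZMod (2 * g)) + h = (g : ZMod (2 * g)) := by
        rw [Nat.cast_sub hlt.le, ZMod.natCast_zmod_val, sub_add_cancel]
      rw [hsum, ZMod.val_natCast_of_lt (by omega)]
      exact lt_irrefl g
  · -- Here `h` itself, the translate of `0`, lies outside `Φ`.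
    exact ⟨0, by rw [ZMod.val_zero]; omega, by rwa [zero_add]⟩
end

section
/- Let g ≥ 1 be an integer such that ℓ := 2g + 1 is prime, and let Φ be the subset of the unit group (ℤ/ℓℤ)^× consisting of the units whose canonical representative lies in {1, …, g}. Then for every nontrivial subgroup H of (ℤ/ℓℤ)^× there exist h ∈ H and u ∈ Φ with u·h ∉ Φ. In particular, Φ is not invariant under multiplication by any nontrivial subgroup of (ℤ/ℓℤ)^×. -/
/-!
Every `h ≠ 1` in `H` works. Let `a` be the representative of `h` in `{2, …, 2g}` and let
`k = ⌊g / a⌋ + 1` be the least integer with `k * a > g`. Then `1 ≤ k ≤ g`, because `a ≥ 2`, and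
`g < k * a ≤ 2g`, so `k * a` is reduced modulo `2g + 1` and lies outside `{1, …, g}`.
-/

/-- Let `g ≥ 1` with `ℓ = 2g + 1` prime, and let `Φ ⊆ (ℤ/ℓℤ)ˣ` consist of the
units whose canonical representative lies in `{1, …, g}`. Then `Φ` is not
invariant under multiplication by any nontrivial subgroup of `(ℤ/ℓℤ)ˣ`: every
nontrivial subgroup `H` contains some `h` for which there is `u ∈ Φ` with
`u * h ∉ Φ`. -/
theorem stmt_16 (g : ℕ) (hg : 1 ≤ g) (hℓ : (2 * g + 1).Prime)
    (H : Subgroup (ZMod (2 * g + 1))ˣ) (hH : H ≠ ⊥) :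
    ∃ h ∈ H, ∃ u : (ZMod (2 * g + 1))ˣ,
      (1 ≤ ((u : ZMod (2 * g + 1)).val) ∧ ((u : ZMod (2 * g + 1)).val) ≤ g) ∧
      ¬ (1 ≤ (((u * h : (ZMod (2 * g + 1))ˣ) : ZMod (2 * g + 1)).val) ∧
          (((u * h : (ZMod (2 * g + 1))ˣ) : ZMod (2 * g + 1)).val) ≤ g) := by
  have : Fact (2 * g + 1).Prime := ⟨hℓ⟩
  obtain ⟨h, hh, h1⟩ := H.ne_bot_iff_exists_ne_one.mp hH |>.elim
    fun x hx => (⟨x.1, x.2, fun e => hx (Subtype.ext e)⟩ : ∃ h, h ∈ H ∧ h ≠ 1)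
  set a := (h : ZMod (2 * g + 1)).val with ha
  have ha_lt : a < 2 * g + 1 := ZMod.val_lt _
  have ha0 : a ≠ 0 := fun e => h.ne_zero ((ZMod.val_eq_zero _).mp e)
  have ha1 : a ≠ 1 := fun e => h1 (Units.ext (by
    rw [← ZMod.natCast_zmod_val (h : ZMod (2 * g + 1)), ← ha, e]; simp))
  have hk_le : g / a + 1 ≤ g := by
    have : g / a < g := Nat.div_lt_self (by omega) (by omega)
    omega
  have hmul_gt : g < (g / a + 1) * a := by
    rw [mul_comm]; exact Nat.lt_mul_div_succ g (by omega)
  have hmul_lt : (g / a + 1) * a < 2 * g + 1 := by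
    rcases lt_or_ge g a with hga | hga
    · rw [Nat.div_eq_of_lt hga]; omega
    · have := Nat.div_mul_le_self g a
      rw [add_mul]; omega
  have hk_val : ((g / a + 1 : ℕ) : ZMod (2 * g + 1)).val = g / a + 1 :=
    ZMod.val_cast_of_lt (by linarith)
  have hk_ne : ((g / a + 1 : ℕ) : ZMod (2 * g + 1)) ≠ 0 := fun e => by
    rw [e, ZMod.val_zero] at hk_val; exact absurd hk_val.symm (Nat.succ_ne_zero _)
  refine ⟨h, hh, Units.mk0 _ hk_ne, ?_, ?_⟩
  · rw [Units.val_mk0, hk_val]; exact ⟨Nat.succ_pos _, hk_le⟩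
  · rw [Units.val_mul, Units.val_mk0, ZMod.val_mul, hk_val, ← ha, Nat.mod_eq_of_lt hmul_lt]
    omega
end
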